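/- Hölder lower bound: let n ≥ 1, a ≥ 0, K ≥ 0, and define X(x) = a + K·∑_{i=1}^n x_i + ∏_{i=1}^n (1+x_i) − 1. For every x¹, x² ∈ [0,∞)^n and every α ∈ [0,1], setting y_i = (x¹_i)^α (x²_i)^{1−α}, one has X(x¹)^α · X(x²)^{1−α} ≥ X(y) = a + K·∑_{i=1}^n y_i + ∏_{i=1}^n (1+y_i) − 1. -/

import Mathlib

open Finset

/-- Normalized mean MAC slot duration `X(x) = a + K·∑ xᵢ + ∏(1+xᵢ) − 1`. -/
noncomputable def Xfun {n : ℕ} (a K : ℝ) (x : Fin n → ℝ) : ℝ :=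
  a + K * ∑ i, x i + ∏ i, (1 + x i) - 1

def HG (α u v w : ℝ) : Prop := 0 ≤ u ∧ 0 ≤ v ∧ 0 ≤ w ∧ w ≤ u ^ α * v ^ (1 - α)

lemma holder_two {α : ℝ} (h0 : 0 ≤ α) (h1 : α ≤ 1) {a b c d : ℝ}
    (ha : 0 ≤ a) (hb : 0 ≤ b) (hc : 0 ≤ c) (hd : 0 ≤ d) :
    a ^ α * b ^ (1 - α) + c ^ α * d ^ (1 - α) ≤ (a + c) ^ α * (b + d) ^ (1 - α) := by
  rcases eq_or_lt_of_le h0 with rfl | h0'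
  · simp
  rcases eq_or_lt_of_le h1 with rfl | h1'
  · simp
  have h2 : 0 < 1 - α := by linarith
  rcases eq_or_lt_of_le (add_nonneg ha hc) with hU | hU
  · have e1 : a = 0 := by linarith
    have e2 : c = 0 := by linarith
    subst e1 e2
    simp [Real.zero_rpow h0'.ne']
  rcases eq_or_lt_of_le (add_nonneg hb hd) with hV | hV
  · have e1 : b = 0 := by linarith
    have e2 : d = 0 := by linarith
    subst e1 e2
    simp [Real.zero_rpow h2.ne']
  have key : ∀ p q : ℝ, 0 ≤ p → 0 ≤ q → p ^ α * q ^ (1 - α) ≤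
      (α * (p / (a + c)) + (1 - α) * (q / (b + d))) * ((a + c) ^ α * (b + d) ^ (1 - α)) := by
    intro p q hp hq
    have h := Real.geom_mean_le_arith_mean2_weighted h0 h2.le (div_nonneg hp hU.le)
      (div_nonneg hq hV.le) (by ring)
    rw [Real.div_rpow hp hU.le, Real.div_rpow hq hV.le, div_mul_div_comm,
      div_le_iff₀ (by positivity)] at h
    exact h
  have k1 := key a b ha hb
  have k2 := key c d hc hd
  have e : (α * (a / (a + c)) + (1 - α) * (b / (b + d)))
      + (α * (c / (a + c)) + (1 - α) * (d / (b + d))) = 1 := by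
    field_simp
    ring
  calc _ ≤ _ := add_le_add k1 k2
    _ = _ := by rw [← add_mul, e, one_mul]

lemma HG.add {α : ℝ} (h0 : 0 ≤ α) (h1 : α ≤ 1) {u v w u' v' w' : ℝ}
    (h : HG α u v w) (h' : HG α u' v' w') : HG α (u + u') (v + v') (w + w') := by
  obtain ⟨a, b, c, d⟩ := h
  obtain ⟨a', b', c', d'⟩ := h'
  exact ⟨by positivity, by positivity, by positivity,
    (add_le_add d d').trans (holder_two h0 h1 a b a' b')⟩

lemma HG.mul {α : ℝ} {u v w u' v' w' : ℝ}
    (h : HG α u v w) (h' : HG α u' v' w') : HG α (u * u') (v * v') (w * w') := by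
  obtain ⟨a, b, c, d⟩ := h
  obtain ⟨a', b', c', d'⟩ := h'
  refine ⟨by positivity, by positivity, by positivity, ?_⟩
  rw [Real.mul_rpow a a', Real.mul_rpow b b', mul_mul_mul_comm]
  exact mul_le_mul d d' c' (by positivity)

lemma HG.const {α : ℝ} (h0 : 0 ≤ α) (h1 : α ≤ 1) {a : ℝ} (ha : 0 ≤ a) : HG α a a a := by
  refine ⟨ha, ha, ha, ?_⟩
  rw [← Real.rpow_add_of_nonneg ha h0 (by linarith)]
  simp

/-- Hölder lower bound `X(x¹)^α · X(x²)^{1−α} ≥ X(y)` where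
`yᵢ = (x¹ᵢ)^α (x²ᵢ)^{1−α}`. -/
theorem Xfun_holder_lower_bound (n : ℕ) (hn : 1 ≤ n)
    (a K : ℝ) (ha : 0 ≤ a) (hK : 0 ≤ K)
    (x₁ x₂ : Fin n → ℝ) (hx₁ : ∀ i, 0 ≤ x₁ i) (hx₂ : ∀ i, 0 ≤ x₂ i)
    (α : ℝ) (hα : α ∈ Set.Icc (0:ℝ) 1)
    (y : Fin n → ℝ) (hy : ∀ i, y i = (x₁ i) ^ α * (x₂ i) ^ (1 - α)) :
    Xfun a K y ≤ (Xfun a K x₁) ^ α * (Xfun a K x₂) ^ (1 - α) := by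
  obtain ⟨h0, h1⟩ := hα
  have hi : ∀ i, HG α (x₁ i) (x₂ i) (y i) := fun i =>
    ⟨hx₁ i, hx₂ i, by
      rw [hy]
      exact mul_nonneg (Real.rpow_nonneg (hx₁ i) _) (Real.rpow_nonneg (hx₂ i) _), (hy i).le⟩
  have hS : ∀ s : Finset (Fin n), HG α (∑ i ∈ s, x₁ i) (∑ i ∈ s, x₂ i) (∑ i ∈ s, y i) := by
    intro s
    induction s using Finset.induction_on with
    | empty => simpa using HG.const h0 h1 le_rfl
    | insert i s his ih =>
      simp only [Finset.sum_insert his]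
      exact (hi i).add h0 h1 ih
  have hP : ∀ s : Finset (Fin n), HG α (∏ i ∈ s, (1 + x₁ i) - 1) (∏ i ∈ s, (1 + x₂ i) - 1)
      (∏ i ∈ s, (1 + y i) - 1) := by
    intro s
    induction s using Finset.induction_on with
    | empty => simpa using HG.const h0 h1 le_rfl
    | insert i s his ih =>
      simp only [Finset.prod_insert his]
      have h := (ih.add h0 h1 (hi i)).add h0 h1 ((hi i).mul ih)
      convert h using 1 <;> ring
  have h := ((HG.const h0 h1 ha).add h0 h1 ((HG.const h0 h1 hK).mul (hS univ))).add h0 h1 (hP univ)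
  simp only [Xfun, add_sub_assoc]
  exact h.2.2.2
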